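/- Let F be an algebraically closed field with characteristic ≠ 2 and ≠ 3. Then the derivation algebra of the algebra E6 with MSC [[0,0,0,1],[0,0,0,0]] is Der(E6) = { [[2t,s],[0,t]] : t, s ∈ F }. -/

import Mathlib

open Matrix Kronecker

variable {F : Type*}

/-- The Kronecker (tensor) product of two `2 × 2` matrices, realized as a `4 × 4` matrix;
rows/columns are indexed in row-major order by the pairs `(1,1), (1,2), (2,1), (2,2)`. -/
def kron [CommRing F] (g h : Matrix (Fin 2) (Fin 2) F) : Matrix (Fin 4) (Fin 4) F :=
  Matrix.reindex finProdFinEquiv finProdFinEquiv (g ⊗ₖ h)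

/-- Two `2`-dimensional algebras given by matrices of structure constants `A, B`
are isomorphic iff `B = g · A · (g⁻¹ ⊗ g⁻¹)` for some `g ∈ GL(2, F)`. -/
def Isomorphic [Field F] (A B : Matrix (Fin 2) (Fin 4) F) : Prop :=
  ∃ g : GL (Fin 2) F,
    B = (g : Matrix (Fin 2) (Fin 2) F) * A *
        kron ((↑(g⁻¹) : Matrix (Fin 2) (Fin 2) F)) ((↑(g⁻¹) : Matrix (Fin 2) (Fin 2) F))

/-- The automorphism group of the algebra with MSC `E`, as a set of (invertible) `2 × 2`
matrices: `Aut(E) = {g ∈ GL(2,F) : g·E = E·(g ⊗ g)}`. -/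
def Aut [Field F] (E : Matrix (Fin 2) (Fin 4) F) : Set (Matrix (Fin 2) (Fin 2) F) :=
  {g | IsUnit g ∧ g * E = E * kron g g}

/-- The derivation algebra of the algebra with MSC `E`:
`Der(E) = { D : E·(D ⊗ I + I ⊗ D) = D·E }`. -/
def Der [Field F] (E : Matrix (Fin 2) (Fin 4) F) : Set (Matrix (Fin 2) (Fin 2) F) :=
  {D | E * (kron D 1 + kron 1 D) = D * E}

/-!
A matrix `D` lies in `Der E` exactly when it satisfies the Leibniz rule for the product
`u · v = E (u ⊗ v)`, because pure tensors span. The only nonzero product of basis vectors in `E6` is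
`e₁ · e₁ = e₀`. Differentiating `e₀ · e₁ = 0` puts `D e₀` on the line of `e₀`, and differentiating
`e₁ · e₁ = e₀` shows that its eigenvalue is twice the `e₁`-coordinate of `D e₁`.
-/

section StructureConstants

variable [CommRing F]

/-- The coordinate vector of the pure tensor `u ⊗ v`, in the row-major order of `kron`.
The factors are swapped because `Matrix.vec` stacks columns. -/
def pureTensor (u v : Fin 2 → F) : Fin 4 → F :=
  vec (vecMulVec v u) ∘ (finProdFinEquiv (m := 2) (n := 2)).symm

/-- The product `u · v = E (u ⊗ v)` of the algebra with matrix of structure constants `E`. -/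
def structureProduct (E : Matrix (Fin 2) (Fin 4) F) (u v : Fin 2 → F) : Fin 2 → F :=
  E *ᵥ pureTensor u v

theorem kron_mulVec_pureTensor (g h : Matrix (Fin 2) (Fin 2) F) (u v : Fin 2 → F) :
    kron g h *ᵥ pureTensor u v = pureTensor (g *ᵥ u) (h *ᵥ v) := by
  simp only [kron, pureTensor, reindex_apply, submatrix_mulVec_equiv, Equiv.symm_symm,
    Function.comp_assoc, Equiv.symm_comp_self, Function.comp_id, kronecker_mulVec_vec,
    mul_vecMulVec, vecMulVec_mul, vecMul_transpose]

theorem pureTensor_single_one (i j : Fin 2) :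
    pureTensor (Pi.single i 1 : Fin 2 → F) (Pi.single j 1) =
      Pi.single (finProdFinEquiv (i, j)) 1 := by
  rw [pureTensor, ← single_eq_single_vecMulVec_single, vec_single]
  exact Pi.single_comp_equiv _ _ _

theorem ext_of_mulVec_pureTensor {m : Type*} {M N : Matrix m (Fin 4) F}
    (h : ∀ u v, M *ᵥ pureTensor u v = N *ᵥ pureTensor u v) : M = N := by
  refine ext_of_mulVec_single fun k ↦ ?_
  obtain ⟨⟨i, j⟩, rfl⟩ := (finProdFinEquiv (m := 2) (n := 2)).surjective k
  simpa only [pureTensor_single_one] using h (Pi.single i 1) (Pi.single j 1)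

end StructureConstants

theorem mem_der_iff_leibniz [Field F] {E : Matrix (Fin 2) (Fin 4) F}
    {D : Matrix (Fin 2) (Fin 2) F} :
    D ∈ Der E ↔ ∀ u v, D *ᵥ structureProduct E u v =
      structureProduct E (D *ᵥ u) v + structureProduct E u (D *ᵥ v) := by
  have leibniz_iff (u v : Fin 2 → F) :
      D *ᵥ structureProduct E u v =
          structureProduct E (D *ᵥ u) v + structureProduct E u (D *ᵥ v) ↔
        (E * (kron D 1 + kron 1 D)) *ᵥ pureTensor u v = (D * E) *ᵥ pureTensor u v := by
    simp only [structureProduct, ← mulVec_mulVec, add_mulVec, mulVec_add,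
      kron_mulVec_pureTensor, one_mulVec]
    exact eq_comm
  simp only [leibniz_iff]
  exact ⟨fun h _ _ ↦ congrArg (· *ᵥ _) h, ext_of_mulVec_pureTensor⟩

/-- The matrix of structure constants of the algebra `E6`. -/
def E6 (R : Type*) [Zero R] [One R] : Matrix (Fin 2) (Fin 4) R :=
  !![0, 0, 0, 1; 0, 0, 0, 0]

theorem structureProduct_E6 [CommRing F] (u v : Fin 2 → F) :
    structureProduct (E6 F) u v = ![u 1 * v 1, 0] := by
  have coord : pureTensor u v 3 = u 1 * v 1 := mul_comm (v 1) (u 1)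
  ext i
  fin_cases i <;> simp [structureProduct, E6, mulVec, dotProduct, Fin.sum_univ_four, coord]

theorem mem_der_E6_iff [Field F] {D : Matrix (Fin 2) (Fin 2) F} :
    D ∈ Der (E6 F) ↔ D 1 0 = 0 ∧ D 0 0 = 2 * D 1 1 := by
  simp only [mem_der_iff_leibniz, structureProduct_E6]
  constructor
  · intro leibniz
    have at_e₀_e₁ : D 1 0 = 0 := by
      simpa [mulVec, dotProduct] using (congrFun (leibniz ![1, 0] ![0, 1]) 0).symm
    have at_e₁_e₁ : D 0 0 = D 1 1 + D 1 1 := by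
      simpa [mulVec, dotProduct] using congrFun (leibniz ![0, 1] ![0, 1]) 0
    exact ⟨at_e₀_e₁, at_e₁_e₁.trans (two_mul _).symm⟩
  · rintro ⟨h₁₀, h₀₀⟩ u v
    ext i
    fin_cases i
    · suffices 2 * D 1 1 * (u 1 * v 1) = D 1 1 * u 1 * v 1 + u 1 * (D 1 1 * v 1) by
        simpa [mulVec, dotProduct, h₁₀, h₀₀]
      ring
    · simp [mulVec, dotProduct, h₁₀]

theorem der_E6_general (F : Type*) [Field F] :
    Der (E6 F) = {D | ∃ t s : F, D = !![2 * t, s; 0, t]} := by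
  ext D
  rw [mem_der_E6_iff]
  constructor
  · rintro ⟨h₁₀, h₀₀⟩
    exact ⟨D 1 1, D 0 1, by rw [← h₀₀, ← h₁₀]; exact eta_fin_two D⟩
  · rintro ⟨t, s, rfl⟩
    exact ⟨rfl, rfl⟩

theorem der_E6 (F : Type*) [Field F] [IsAlgClosed F]
    (h2 : ringChar F ≠ 2) (h3 : ringChar F ≠ 3) :
    Der (!![0, 0, 0, 1; 0, 0, 0, 0] : Matrix (Fin 2) (Fin 4) F) =
      {D | ∃ t s : F, D = !![2 * t, s; 0, t]} :=
  der_E6_general F
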